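/- Two-body kick-error term (paper eq. 19a): for i ≠ j and any phase-space point (x,p) with r_ij ≠ 0, the nested canonical Poisson bracket satisfies {{T, V_ij}, V_ij}(x,p) = G² (m i)(m j)((m i)+(m j)) / r_ij⁴. -/

import Mathlib

open scoped RealInnerProductSpace BigOperators

noncomputable section

/-- Three-dimensional Euclidean space. -/
abbrev E3 : Type := EuclideanSpace ℝ (Fin 3)

/-- Phase space for `N` particles: positions and momenta. -/
abbrev Phase (N : ℕ) : Type := (Fin N → E3) × (Fin N → E3)

/-- Gradient of a phase-space function with respect to the `k`-th position. -/
def gradPos {N : ℕ} (A : Phase N → ℝ) (k : Fin N) (w : Phase N) : E3 :=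
  gradient (fun y => A (Function.update w.1 k y, w.2)) (w.1 k)

/-- Gradient of a phase-space function with respect to the `k`-th momentum. -/
def gradMom {N : ℕ} (A : Phase N → ℝ) (k : Fin N) (w : Phase N) : E3 :=
  gradient (fun y => A (w.1, Function.update w.2 k y)) (w.2 k)

/-- Canonical Poisson bracket of two phase-space functions. -/
def poisson {N : ℕ} (A B : Phase N → ℝ) (w : Phase N) : ℝ :=
  ∑ k, (⟪gradPos A k w, gradMom B k w⟫ - ⟪gradMom A k w, gradPos B k w⟫)

/-- Kinetic energy `T = Σ_i ‖p_i‖²/(2 m_i)`. -/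
def kinetic {N : ℕ} (m : Fin N → ℝ) (w : Phase N) : ℝ :=
  ∑ i, ‖w.2 i‖ ^ 2 / (2 * m i)

/-- Pair potential `V_ij = −G m_i m_j / ‖x_i − x_j‖`. -/
def pairPot {N : ℕ} (G : ℝ) (m : Fin N → ℝ) (i j : Fin N) (w : Phase N) : ℝ :=
  -(G * m i * m j) / ‖w.1 i - w.1 j‖

/-!
For a potential `V` depending on positions only, `{T, V} = -∑ k, ⟪∇_k V, p k⟫ / m k` is linear in
the momenta, so `{{T, V}, V} = ∑ k, ‖∇_k V‖² / m k`. If `V = φ(r_ij)`, then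
`‖∇_i V‖ = ‖∇_j V‖ = |φ'(r_ij)|` because the gradient of the norm is a unit vector, and every other
`∇_k V` vanishes.
-/

section Gradient

variable {𝕜 E : Type*} [RCLike 𝕜] [NormedAddCommGroup E] [InnerProductSpace 𝕜 E] [CompleteSpace E]

lemma gradient_sum_update {ι : Type*} [Fintype ι] [DecidableEq ι] (f : ι → E → 𝕜) (p : ι → E)
    (k : ι) : gradient (fun y => ∑ l, f l (Function.update p k y l)) (p k) =
      gradient (f k) (p k) := by
  have split_sum (y : E) : ∑ l, f l (Function.update p k y l) =
      f k y + ∑ l ∈ Finset.univ.erase k, f l (p l) := by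
    rw [← Finset.add_sum_erase _ _ (Finset.mem_univ k), Function.update_self]
    congr 1
    exact Finset.sum_congr rfl fun l hl => by
      rw [Function.update_of_ne (Finset.ne_of_mem_erase hl)]
  simp only [split_sum, gradient, fderiv_add_const]

lemma gradient_inner_right (v a : E) : gradient (fun y => inner 𝕜 v y) a = v :=
  (hasGradientAt_iff_hasFDerivAt.2 (InnerProductSpace.toDual 𝕜 E v).hasFDerivAt).gradient

lemma norm_gradient (f : E → 𝕜) (a : E) : ‖gradient f a‖ = ‖fderiv 𝕜 f a‖ := by
  rw [← toDual_gradient, LinearIsometryEquiv.norm_map]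

end Gradient

section GradientNorm

variable {E : Type*} [NormedAddCommGroup E] [InnerProductSpace ℝ E] [CompleteSpace E]

lemma gradient_norm_sq_div_two_mul (c : ℝ) (a : E) :
    gradient (fun y => ‖y‖ ^ 2 / (2 * c)) a = c⁻¹ • a := by
  have hderiv : HasFDerivAt (fun y : E => ‖y‖ ^ 2 / (2 * c))
      ((2 * c)⁻¹ • 2 • innerSL ℝ a) a := by
    simpa only [div_eq_inv_mul, smul_eq_mul] using
      (hasStrictFDerivAt_norm_sq a).hasFDerivAt.const_mul (2 * c)⁻¹
  have hdual : InnerProductSpace.toDual ℝ E (c⁻¹ • a) = (2 * c)⁻¹ • 2 • innerSL ℝ a := by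
    ext y
    simp only [map_smul, smul_apply, InnerProductSpace.toDual_apply_apply, coe_innerSL_apply,
      smul_eq_mul, mul_inv_rev, nsmul_eq_mul, Nat.cast_ofNat]
    ring
  exact HasGradientAt.gradient (hasGradientAt_iff_hasFDerivAt.2 (hdual ▸ hderiv))

lemma norm_gradient_comp_norm_sub {φ : ℝ → ℝ} {φ' : ℝ} {a b : E} (hab : a ≠ b)
    (hφ : HasDerivAt φ φ' ‖a - b‖) : ‖gradient (fun y => φ ‖y - b‖) a‖ = |φ'| := by
  have : Nontrivial E := nontrivial_of_ne a b hab
  have hnorm : DifferentiableAt ℝ (‖·‖) (a - b) :=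
    (contDiffAt_norm ℝ (sub_ne_zero.2 hab)).differentiableAt one_ne_zero
  have hdist : HasFDerivAt (fun y => ‖y - b‖) (fderiv ℝ (‖·‖) (a - b)) a :=
    (hasFDerivAt_comp_sub b).2 hnorm.hasFDerivAt
  have hchain := hφ.comp_hasFDerivAt a hdist
  calc ‖gradient (fun y => φ ‖y - b‖) a‖ = ‖φ' • fderiv ℝ (‖·‖) (a - b)‖ := by
        rw [norm_gradient, ← hchain.fderiv]; rfl
    _ = |φ'| := by rw [norm_smul, norm_fderiv_norm hnorm, mul_one, Real.norm_eq_abs]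

end GradientNorm

section PositionPotential

variable {N : ℕ} (m : Fin N → ℝ) (V : (Fin N → E3) → ℝ)

lemma gradMom_comp_fst (k : Fin N) (w : Phase N) : gradMom (V ∘ Prod.fst) k w = 0 :=
  gradient_fun_const (w.2 k) (V w.1)

lemma gradMom_kinetic (k : Fin N) (w : Phase N) :
    gradMom (kinetic m) k w = (m k)⁻¹ • w.2 k :=
  (gradient_sum_update (fun l y => ‖y‖ ^ 2 / (2 * m l)) w.2 k).trans
    (gradient_norm_sq_div_two_mul (m k) (w.2 k))

lemma poisson_comp_fst (A : Phase N → ℝ) (w : Phase N) :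
    poisson A (V ∘ Prod.fst) w = -∑ k, ⟪gradMom A k w, gradPos (V ∘ Prod.fst) k w⟫ := by
  simp only [poisson, gradMom_comp_fst, inner_zero_right, zero_sub, Finset.sum_neg_distrib]

lemma poisson_kinetic_comp_fst (w : Phase N) :
    poisson (kinetic m) (V ∘ Prod.fst) w =
      ∑ k, ⟪-(m k)⁻¹ • gradPos (V ∘ Prod.fst) k w, w.2 k⟫ := by
  rw [poisson_comp_fst, ← Finset.sum_neg_distrib]
  refine Finset.sum_congr rfl fun k _ => ?_
  rw [gradMom_kinetic, real_inner_smul_left, real_inner_smul_left, real_inner_comm, neg_mul]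

lemma gradMom_poisson_kinetic_comp_fst (k : Fin N) (w : Phase N) :
    gradMom (poisson (kinetic m) (V ∘ Prod.fst)) k w =
      -(m k)⁻¹ • gradPos (V ∘ Prod.fst) k w := by
  simp only [gradMom, poisson_kinetic_comp_fst]
  exact (gradient_sum_update (fun l y => ⟪-(m l)⁻¹ • gradPos (V ∘ Prod.fst) l w, y⟫) w.2 k).trans
    (gradient_inner_right _ _)

lemma poisson_poisson_kinetic_comp_fst (w : Phase N) :
    poisson (poisson (kinetic m) (V ∘ Prod.fst)) (V ∘ Prod.fst) w =
      ∑ k, ‖gradPos (V ∘ Prod.fst) k w‖ ^ 2 / m k := by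
  simp only [poisson_comp_fst _ (poisson _ _), gradMom_poisson_kinetic_comp_fst,
    real_inner_smul_left, real_inner_self_eq_norm_sq, neg_mul, Finset.sum_neg_distrib, neg_neg,
    inv_mul_eq_div]

end PositionPotential

section CentralPotential

variable {N : ℕ}

/-- The potential `φ(r_ij)` of a central force between particles `i` and `j`, as a function of the
positions alone; composing with `Prod.fst` makes it a phase-space function. -/
def centralPot (φ : ℝ → ℝ) (i j : Fin N) (x : Fin N → E3) : ℝ :=
  φ ‖x i - x j‖

lemma centralPot_comm (φ : ℝ → ℝ) (i j : Fin N) : centralPot φ i j = centralPot φ j i := by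
  funext x
  rw [centralPot, centralPot, norm_sub_rev]

lemma gradPos_centralPot_of_ne (φ : ℝ → ℝ) {i j k : Fin N} (hi : i ≠ k) (hj : j ≠ k)
    (w : Phase N) : gradPos (centralPot φ i j ∘ Prod.fst) k w = 0 := by
  simp only [gradPos, centralPot, Function.comp_apply, Function.update_of_ne hi,
    Function.update_of_ne hj, gradient_fun_const]

lemma norm_gradPos_centralPot_left {φ : ℝ → ℝ} {φ' : ℝ} {i j : Fin N} {w : Phase N}
    (hw : w.1 i ≠ w.1 j) (hφ : HasDerivAt φ φ' ‖w.1 i - w.1 j‖) :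
    ‖gradPos (centralPot φ i j ∘ Prod.fst) i w‖ = |φ'| := by
  have hji : j ≠ i := ne_of_apply_ne w.1 hw.symm
  simpa only [gradPos, centralPot, Function.comp_apply, Function.update_self,
    Function.update_of_ne hji] using norm_gradient_comp_norm_sub hw hφ

lemma norm_gradPos_centralPot_right {φ : ℝ → ℝ} {φ' : ℝ} {i j : Fin N} {w : Phase N}
    (hw : w.1 i ≠ w.1 j) (hφ : HasDerivAt φ φ' ‖w.1 i - w.1 j‖) :
    ‖gradPos (centralPot φ i j ∘ Prod.fst) j w‖ = |φ'| := by
  rw [norm_sub_rev] at hφ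
  rw [centralPot_comm, norm_gradPos_centralPot_left hw.symm hφ]

theorem kick_error_two_body_general (m : Fin N → ℝ) (hm : ∀ k, m k ≠ 0) (i j : Fin N)
    (w : Phase N) (hw : w.1 i ≠ w.1 j) (φ : ℝ → ℝ) (φ' : ℝ)
    (hφ : HasDerivAt φ φ' ‖w.1 i - w.1 j‖) :
    poisson (poisson (kinetic m) (centralPot φ i j ∘ Prod.fst)) (centralPot φ i j ∘ Prod.fst) w =
      φ' ^ 2 * (m i + m j) / (m i * m j) := by
  have hij : i ≠ j := ne_of_apply_ne w.1 hw
  have other_terms (k : Fin N) (hk : k ≠ i ∧ k ≠ j) :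
      ‖gradPos (centralPot φ i j ∘ Prod.fst) k w‖ ^ 2 / m k = 0 := by
    rw [gradPos_centralPot_of_ne φ hk.1.symm hk.2.symm, norm_zero, zero_pow two_ne_zero, zero_div]
  have hi := hm i
  have hj := hm j
  calc poisson (poisson (kinetic m) (centralPot φ i j ∘ Prod.fst)) (centralPot φ i j ∘ Prod.fst) w
      = ∑ k, ‖gradPos (centralPot φ i j ∘ Prod.fst) k w‖ ^ 2 / m k :=
        poisson_poisson_kinetic_comp_fst m _ w
    _ = φ' ^ 2 / m i + φ' ^ 2 / m j := by
        rw [Finset.sum_eq_add_of_mem i j (Finset.mem_univ i) (Finset.mem_univ j) hij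
          fun k _ => other_terms k, norm_gradPos_centralPot_left hw hφ,
          norm_gradPos_centralPot_right hw hφ, sq_abs]
    _ = φ' ^ 2 * (m i + m j) / (m i * m j) := by
        field_simp
        ring

end CentralPotential

lemma pairPot_eq_centralPot_comp_fst {N : ℕ} (G : ℝ) (m : Fin N → ℝ) (i j : Fin N) :
    pairPot G m i j = centralPot (fun r => -(G * m i * m j) / r) i j ∘ Prod.fst :=
  rfl

/-- Two-body kick-error term (paper eq. 19a):
`{{T, V_ij}, V_ij} = G² m_i m_j (m_i + m_j) / r_ij⁴`. -/
theorem kick_error_two_body {N : ℕ} (G : ℝ) (hG : 0 < G) (m : Fin N → ℝ)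
    (hm : ∀ i, 0 < m i) (i j : Fin N) (hij : i ≠ j) (w : Phase N)
    (hr : ‖w.1 i - w.1 j‖ ≠ 0) :
    poisson (poisson (kinetic m) (pairPot G m i j)) (pairPot G m i j) w =
      G ^ 2 * m i * m j * (m i + m j) / ‖w.1 i - w.1 j‖ ^ 4 := by
  have hi := (hm i).ne'
  have hj := (hm j).ne'
  have hne : w.1 i ≠ w.1 j := sub_ne_zero.1 (norm_ne_zero_iff.1 hr)
  have hderiv := (hasDerivAt_const _ (-(G * m i * m j))).fun_div (hasDerivAt_id' _) hr
  rw [pairPot_eq_centralPot_comp_fst,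
    kick_error_two_body_general m (fun k => (hm k).ne') i j w hne _ _ hderiv]
  field_simp
  ring
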